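/- Let A, B ⊆ C be amenable. For every condition p ∈ 𝒫(A,B) and every a ∈ A not in the domain of p, there exists a condition q ∈ 𝒫(A,B) extending p whose domain is the domain of p together with a. -/

import Mathlib

/-- `D_η = {σ : ℕ → Bool | ∀ n, σ (2n) = η n}` in Cantor space. -/
def DsetB (η : ℕ → Bool) : Set (ℕ → Bool) := {σ | ∀ n, σ (2 * n) = η n}

/-- `b_η` is the element of `D_η` with `b_η (2n) = η n` and `b_η (2n+1) = 1`. -/
def bfun (η : ℕ → Bool) : ℕ → Bool := fun n => if n % 2 = 0 then η (n / 2) else true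

/-- `S_η`: elements of `D_η` with `σ (2n+1) = 0` for all but finitely many `n`,
together with the extra point `b_η`. -/
def SsetB (η : ℕ → Bool) : Set (ℕ → Bool) :=
  {σ | σ ∈ DsetB η ∧ {n | σ (2 * n + 1) ≠ false}.Finite} ∪ {bfun η}

/-- `C = ⋃_η S_η`. -/
def CsetB : Set (ℕ → Bool) := ⋃ η : ℕ → Bool, SsetB η

/-- `E_i (σ, τ)` holds iff `σ` and `τ` agree below `i`. -/
def Erel (i : ℕ) (σ τ : ℕ → Bool) : Prop := ∀ k < i, σ k = τ k

/-- A set `M ⊆ C` is amenable if whenever some element of `S_η` agrees with a finite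
sequence `s` on all indices below `n`, some element of `M ∩ S_η` does as well. -/
def AmenableB (M : Set (ℕ → Bool)) : Prop :=
  ∀ (η : ℕ → Bool) (n : ℕ) (s : Fin n → Bool),
    (∃ ν ∈ SsetB η, ∀ k : Fin n, ν k = s k) →
    ∃ ν ∈ M ∩ SsetB η, ∀ k : Fin n, ν k = s k

/-- A condition in the forcing `𝒫(A,B)`: a finite partial injection from `A` to `B`
(given by its graph) preserving each `E_i` and each predicate `S_η`. -/
structure CondB (A B : Set (ℕ → Bool)) where
  graph : Set ((ℕ → Bool) × (ℕ → Bool))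
  finite : graph.Finite
  dom_sub : ∀ ⦃x y⦄, (x, y) ∈ graph → x ∈ A
  ran_sub : ∀ ⦃x y⦄, (x, y) ∈ graph → y ∈ B
  functional : ∀ ⦃x y y'⦄, (x, y) ∈ graph → (x, y') ∈ graph → y = y'
  injective : ∀ ⦃x x' y⦄, (x, y) ∈ graph → (x', y) ∈ graph → x = x'
  epres : ∀ ⦃x y x' y'⦄ (i : ℕ), (x, y) ∈ graph → (x', y') ∈ graph →
    (Erel i x x' ↔ Erel i y y')
  spres : ∀ ⦃x y⦄ (η : ℕ → Bool), (x, y) ∈ graph → (x ∈ SsetB η ↔ y ∈ SsetB η)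

/-- Two conditions are compatible if some condition extends both. -/
def CompatibleB {A B : Set (ℕ → Bool)} (p q : CondB A B) : Prop :=
  ∃ r : CondB A B, p.graph ⊆ r.graph ∧ q.graph ⊆ r.graph

/-!
Let `a ∈ S_η` lie outside the domain of `p`, and choose `(x₀, y₀)` in the graph of `p` such that the
first index `m` at which `a` and `x₀` differ is as large as possible. Amenability of `B` yields
`b ∈ B ∩ S_η` that branches off from `y₀` exactly at `m`; the even coordinates cause no conflict
since `x₀` and `y₀` lie in the same `S_θ`, hence have the same even coordinates. As the alphabet has
only two letters, `x` branches off from `a` no later than `m` precisely when `x` either leaves `x₀`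
before `m` or agrees with `x₀` through `m`. This is a condition on `x` and `x₀` alone, so `p`
transfers it to `y` and `y₀`, and `p ∪ {(a, b)}` preserves every `E_i`.
-/

namespace Erel

variable {i j : ℕ} {σ τ ρ : ℕ → Bool}

theorem refl (i : ℕ) (σ : ℕ → Bool) : Erel i σ σ := fun _ _ => rfl

theorem symm (h : Erel i σ τ) : Erel i τ σ := fun k hk => (h k hk).symm

theorem comm : Erel i σ τ ↔ Erel i τ σ := ⟨symm, symm⟩

theorem trans (h : Erel i σ τ) (h' : Erel i τ ρ) : Erel i σ ρ :=
  fun k hk => (h k hk).trans (h' k hk)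

theorem mono (hij : i ≤ j) (h : Erel j σ τ) : Erel i σ τ := fun k hk => h k (hk.trans_le hij)

theorem congr_left (h : Erel i σ τ) : Erel i σ ρ ↔ Erel i τ ρ := ⟨h.symm.trans, h.trans⟩

end Erel

theorem erel_succ_iff {i : ℕ} {σ τ : ℕ → Bool} : Erel (i + 1) σ τ ↔ Erel i σ τ ∧ σ i = τ i :=
  Nat.forall_lt_succ_right

theorem forall_erel_iff_eq {σ τ : ℕ → Bool} : (∀ i, Erel i σ τ) ↔ σ = τ :=
  ⟨fun h => funext fun k => h (k + 1) k k.lt_succ_self, fun h i => h ▸ Erel.refl i σ⟩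

theorem erel_iff_le_firstDiff {σ τ : ℕ → Bool} (hne : σ ≠ τ) (i : ℕ) :
    Erel i σ τ ↔ i ≤ PiNat.firstDiff σ τ :=
  PiNat.mem_cylinder_iff_le_firstDiff hne i

section Branching

variable {m : ℕ} {a b x x₀ y y₀ : ℕ → Bool}

/- The two-letter alphabet enters here: at index `m`, any sequence agrees with exactly one of `a`
and `x₀`. -/
theorem not_erel_succ_iff_of_branch (h : Erel m a x₀) (hne : a m ≠ x₀ m) :
    ¬Erel (m + 1) a x ↔ (Erel m x₀ x → Erel (m + 1) x₀ x) := by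
  have letter : a m ≠ x m ↔ x₀ m = x m := by
    rw [Bool.eq_not_of_ne hne, ne_eq, Bool.not_not_eq]
  simp only [erel_succ_iff, h.congr_left, not_and, letter]
  tauto

theorem erel_iff_erel_of_branch (hax : Erel m a x₀) (hax_ne : a m ≠ x₀ m) (hby : Erel m b y₀)
    (hby_ne : b m ≠ y₀ m) (hxy : ∀ i, Erel i x₀ x ↔ Erel i y₀ y) (hx : ¬Erel (m + 1) a x) (i : ℕ) :
    Erel i a x ↔ Erel i b y := by
  have hy : ¬Erel (m + 1) b y := by
    rwa [not_erel_succ_iff_of_branch hby hby_ne, ← hxy, ← hxy,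
      ← not_erel_succ_iff_of_branch hax hax_ne]
  rcases le_or_gt i m with him | him
  · rw [(hax.mono him).congr_left, (hby.mono him).congr_left, hxy]
  · exact iff_of_false (fun h => hx (h.mono him)) (fun h => hy (h.mono him))

end Branching

theorem bfun_two_mul (η : ℕ → Bool) (n : ℕ) : bfun η (2 * n) = η n := by
  simp [bfun]

theorem SsetB_subset_DsetB (η : ℕ → Bool) : SsetB η ⊆ DsetB η :=
  Set.union_subset (fun _ hσ => hσ.1) (Set.singleton_subset_iff.2 (bfun_two_mul η))

theorem mem_SsetB_iff_eq {η θ σ : ℕ → Bool} (hσ : σ ∈ SsetB η) : σ ∈ SsetB θ ↔ θ = η := by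
  refine ⟨fun hσ' => funext fun n => ?_, fun h => h ▸ hσ⟩
  rw [← SsetB_subset_DsetB θ hσ' n, SsetB_subset_DsetB η hσ n]

theorem exists_mem_SsetB_erel {η σ : ℕ → Bool} {n : ℕ} (hσ : ∀ k, 2 * k < n → σ (2 * k) = η k) :
    ∃ ν ∈ SsetB η, Erel n ν σ := by
  let ν : ℕ → Bool := fun k => if k < n then σ k else if Even k then η (k / 2) else false
  have ν_even (k : ℕ) : ν (2 * k) = η k := by
    by_cases hk : 2 * k < n
    · simp [ν, hk, hσ k hk]
    · simp [ν, hk]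
  have ν_odd (k : ℕ) (hk : n ≤ k) : ν (2 * k + 1) = false := by
    simp [ν, show ¬2 * k + 1 < n by lia]
  have finite_ν : {k | ν (2 * k + 1) ≠ false}.Finite :=
    (Set.finite_Iio n).subset fun k hk => not_le.1 fun hnk => hk (ν_odd k hnk)
  exact ⟨ν, Or.inl ⟨ν_even, finite_ν⟩, fun k hk => if_pos hk⟩

namespace AmenableB

variable {M : Set (ℕ → Bool)} {η : ℕ → Bool}

theorem exists_erel (hM : AmenableB M) {σ : ℕ → Bool} {n : ℕ}
    (hσ : ∀ k, 2 * k < n → σ (2 * k) = η k) : ∃ ν ∈ M ∩ SsetB η, Erel n ν σ := by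
  obtain ⟨ν, hνη, hνσ⟩ := exists_mem_SsetB_erel hσ
  obtain ⟨μ, hμ, hμσ⟩ := hM η n (fun k => σ k) ⟨ν, hνη, fun k => hνσ k k.isLt⟩
  exact ⟨μ, hμ, fun k hk => hμσ ⟨k, hk⟩⟩

theorem exists_branch (hM : AmenableB M) {a x y : ℕ → Bool} {m : ℕ} (ha : a ∈ DsetB η)
    (hxy : ∀ k, x (2 * k) = y (2 * k)) (hax : Erel m a x) (hne : a m ≠ x m) :
    ∃ b ∈ M ∩ SsetB η, Erel m b y ∧ b m ≠ y m := by
  let σ := Function.update y m (!y m)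
  have σ_even (k : ℕ) (hk : 2 * k < m + 1) : σ (2 * k) = η k := by
    rw [← ha k]
    rcases (Nat.lt_succ_iff.1 hk).lt_or_eq with hkm | rfl
    · simp [σ, hkm.ne, ← hxy, hax _ hkm]
    · simp [σ, ← hxy, Bool.eq_not_of_ne hne]
  obtain ⟨b, hb, hbσ⟩ := hM.exists_erel σ_even
  obtain ⟨hbσ_lt, hbσ_m⟩ := erel_succ_iff.1 hbσ
  have hσy : Erel m σ y := fun k hk => Function.update_of_ne hk.ne _ _
  exact ⟨b, hb, hbσ_lt.trans hσy, by simp [hbσ_m, σ]⟩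

end AmenableB

namespace CondB

variable {A B : Set (ℕ → Bool)} {a b : ℕ → Bool}

theorem apply_two_mul_eq (hAC : A ⊆ CsetB) (p : CondB A B) {x y : ℕ → Bool}
    (hxy : (x, y) ∈ p.graph) (k : ℕ) : x (2 * k) = y (2 * k) := by
  obtain ⟨θ, hθ⟩ := Set.mem_iUnion.1 (hAC (p.dom_sub hxy))
  rw [SsetB_subset_DsetB θ hθ k, SsetB_subset_DsetB θ ((p.spres θ hxy).1 hθ) k]

theorem exists_forall_not_erel_succ (p : CondB A B) (hp : p.graph.Nonempty)
    (ha : ∀ y, (a, y) ∉ p.graph) :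
    ∃ m x₀ y₀, (x₀, y₀) ∈ p.graph ∧ Erel m a x₀ ∧ a m ≠ x₀ m ∧
      ∀ ⦃x y⦄, (x, y) ∈ p.graph → ¬Erel (m + 1) a x := by
  have ne_of_mem ⦃x y : ℕ → Bool⦄ (hxy : (x, y) ∈ p.graph) : a ≠ x :=
    fun h => ha y (h ▸ hxy)
  obtain ⟨⟨x₀, y₀⟩, h₀, hmax⟩ :=
    p.graph.exists_max_image (fun z => PiNat.firstDiff a z.1) p.finite hp
  refine ⟨PiNat.firstDiff a x₀, x₀, y₀, h₀, (erel_iff_le_firstDiff (ne_of_mem h₀) _).2 le_rfl,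
    PiNat.apply_firstDiff_ne (ne_of_mem h₀), fun x y hxy => ?_⟩
  rw [erel_iff_le_firstDiff (ne_of_mem hxy), not_le]
  exact Nat.lt_succ_of_le (hmax _ hxy)

theorem exists_image (hAC : A ⊆ CsetB) (hB : AmenableB B) (p : CondB A B) {η : ℕ → Bool}
    (haη : a ∈ SsetB η) :
    ∃ b ∈ B ∩ SsetB η, ∀ ⦃x y⦄ (i : ℕ), (x, y) ∈ p.graph → (Erel i a x ↔ Erel i b y) := by
  by_cases ha : ∃ y, (a, y) ∈ p.graph
  · obtain ⟨b, hab⟩ := ha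
    exact ⟨b, ⟨p.ran_sub hab, (p.spres η hab).1 haη⟩, fun x y i => p.epres i hab⟩
  rcases p.graph.eq_empty_or_nonempty with hp | hp
  · have a_even (k : ℕ) (_ : 2 * k < 0) : a (2 * k) = η k := SsetB_subset_DsetB η haη k
    obtain ⟨b, hb, -⟩ := hB.exists_erel a_even
    exact ⟨b, hb, by simp [hp]⟩
  obtain ⟨m, x₀, y₀, h₀, hax, hax_ne, hmax⟩ :=
    p.exists_forall_not_erel_succ hp (not_exists.1 ha)
  obtain ⟨b, hb, hby, hby_ne⟩ :=
    hB.exists_branch (SsetB_subset_DsetB η haη) (p.apply_two_mul_eq hAC h₀) hax hax_ne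
  exact ⟨b, hb, fun x y i hxy =>
    erel_iff_erel_of_branch hax hax_ne hby hby_ne (fun j => p.epres j h₀ hxy) (hmax hxy) i⟩

theorem erel_iff_of_mem_insert (p : CondB A B)
    (hE : ∀ ⦃x y⦄ (i : ℕ), (x, y) ∈ p.graph → (Erel i a x ↔ Erel i b y))
    ⦃x y x' y' : ℕ → Bool⦄ (i : ℕ) (h : (x, y) ∈ insert (a, b) p.graph)
    (h' : (x', y') ∈ insert (a, b) p.graph) : Erel i x x' ↔ Erel i y y' := by
  rw [Set.mem_insert_iff, Prod.mk.injEq] at h h'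
  rcases h with ⟨rfl, rfl⟩ | h <;> rcases h' with ⟨rfl, rfl⟩ | h'
  · exact iff_of_true (Erel.refl i _) (Erel.refl i _)
  · exact hE i h'
  · rw [Erel.comm, hE i h, Erel.comm]
  · exact p.epres i h h'

/-- The condition `p ∪ {(a, b)}`, which extends `p` by one point. Preservation of the `E_i` makes it
a partial injection, since two sequences are equal iff they are `E_i`-related for all `i`. -/
protected def insert (p : CondB A B) (ha : a ∈ A) (hb : b ∈ B)
    (hE : ∀ ⦃x y⦄ (i : ℕ), (x, y) ∈ p.graph → (Erel i a x ↔ Erel i b y))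
    (hS : ∀ η, a ∈ SsetB η ↔ b ∈ SsetB η) : CondB A B where
  graph := insert (a, b) p.graph
  finite := p.finite.insert _
  dom_sub := by
    simp only [Set.mem_insert_iff, Prod.mk.injEq]
    rintro x y (⟨rfl, rfl⟩ | h)
    exacts [ha, p.dom_sub h]
  ran_sub := by
    simp only [Set.mem_insert_iff, Prod.mk.injEq]
    rintro x y (⟨rfl, rfl⟩ | h)
    exacts [hb, p.ran_sub h]
  functional x _ _ h h' :=
    forall_erel_iff_eq.1 fun i => (p.erel_iff_of_mem_insert hE i h h').1 (Erel.refl i x)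
  injective _ _ y h h' :=
    forall_erel_iff_eq.1 fun i => (p.erel_iff_of_mem_insert hE i h h').2 (Erel.refl i y)
  epres := p.erel_iff_of_mem_insert hE
  spres := by
    simp only [Set.mem_insert_iff, Prod.mk.injEq]
    rintro x y η (⟨rfl, rfl⟩ | h)
    exacts [hS η, p.spres η h]

end CondB

theorem condB_extend_general (A B : Set (ℕ → Bool)) (hAC : A ⊆ CsetB) (hB : AmenableB B)
    (p : CondB A B) (a : ℕ → Bool) (ha : a ∈ A) :
    ∃ q : CondB A B, p.graph ⊆ q.graph ∧
      ∀ x, (∃ y, (x, y) ∈ q.graph) ↔ (∃ y, (x, y) ∈ p.graph) ∨ x = a := by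
  obtain ⟨η, haη⟩ := Set.mem_iUnion.1 (hAC ha)
  obtain ⟨b, ⟨hbB, hbη⟩, hE⟩ := p.exists_image hAC hB haη
  have hS (θ : ℕ → Bool) : a ∈ SsetB θ ↔ b ∈ SsetB θ := by
    rw [mem_SsetB_iff_eq haη, mem_SsetB_iff_eq hbη]
  refine ⟨p.insert ha hbB hE hS, Set.subset_insert _ _, fun x => ?_⟩
  simp [CondB.insert, exists_or, or_comm]

/-- For amenable `A, B ⊆ C`, every condition can be extended to have any prescribed
element `a ∈ A` in its domain. -/
theorem condB_extend (A B : Set (ℕ → Bool)) (hAC : A ⊆ CsetB) (hBC : B ⊆ CsetB)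
    (hA : AmenableB A) (hB : AmenableB B) (p : CondB A B) (a : ℕ → Bool) (ha : a ∈ A)
    (hnd : ∀ y, (a, y) ∉ p.graph) :
    ∃ q : CondB A B, p.graph ⊆ q.graph ∧
      ∀ x, (∃ y, (x, y) ∈ q.graph) ↔ (∃ y, (x, y) ∈ p.graph) ∨ x = a :=
  condB_extend_general A B hAC hB p a ha
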